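/- Let δt > 0 and let u, ũ, λ, μ : S → ℝ be such that for every z ∈ S one has 3u(z) − 2δt·λ(z) = 3ũ(z) − 2δt·μ(z), together with the complementarity condition λ(z)·u(z) = 0 for all z. Then 3‖u‖² + (4/3)δt²‖λ‖² = 3‖ũ‖² − 4δt·[ũ, μ] + (4/3)δt²‖μ‖². -/

import Mathlib

open Finset

/-!
Both sides of the correction step are the same vector, so they have the same square norm.
Complementarity makes the cross term `[u, λ]` vanish on the left; dividing by `3` leaves the
identity.
-/

/-- The discrete inner product `[u, v]` on functions of the collocation points, encoded as a
bilinear form so that its expansion rules come from linearity. -/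
def discreteInner {R S : Type*} [CommSemiring R] [Fintype S] (w : S → R) :
    LinearMap.BilinForm R (S → R) :=
  ∑ z, w z • LinearMap.BilinForm.linMulLin (LinearMap.proj z) (LinearMap.proj z)

namespace discreteInner

variable {R S : Type*} [CommSemiring R] [Fintype S] (w : S → R)

theorem apply_eq_sum (u v : S → R) : discreteInner w u v = ∑ z, w z * u z * v z := by
  simp [discreteInner, LinearMap.sum_apply, mul_assoc]

theorem isSymm : (discreteInner w).IsSymm where
  eq u v := by simp only [apply_eq_sum, mul_right_comm]

variable {w} in
theorem eq_zero_of_mul_eq_zero {u v : S → R} (huv : ∀ z, u z * v z = 0) :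
    discreteInner w u v = 0 := by
  simp only [apply_eq_sum, mul_assoc, huv, mul_zero, sum_const_zero]

end discreteInner

theorem bilinForm_smul_sub_smul_self {R M : Type*} [CommRing R] [AddCommGroup M] [Module R M]
    {B : LinearMap.BilinForm R M} (hB : B.IsSymm) (a b : R) (x y : M) :
    B (a • x - b • y) (a • x - b • y) = a ^ 2 * B x x - 2 * a * b * B x y + b ^ 2 * B y y := by
  simp only [map_sub, map_smul, LinearMap.sub_apply, LinearMap.smul_apply, smul_eq_mul, hB.eq y x]
  ring

theorem bdf2_correction_step_identity_general {K M : Type*} [Field K] [AddCommGroup M] [Module K M]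
    (h3 : (3 : K) ≠ 0) {B : LinearMap.BilinForm K M} (hB : B.IsSymm) {δt : K} {u ut lam μ : M}
    (hstep : (3 : K) • u - (2 * δt) • lam = (3 : K) • ut - (2 * δt) • μ)
    (horth : B lam u = 0) :
    3 * B u u + (4 / 3) * δt ^ 2 * B lam lam
      = 3 * B ut ut - 4 * δt * B ut μ + (4 / 3) * δt ^ 2 * B μ μ := by
  have hsq : 3 ^ 2 * B u u - 2 * 3 * (2 * δt) * B u lam + (2 * δt) ^ 2 * B lam lam
      = 3 ^ 2 * B ut ut - 2 * 3 * (2 * δt) * B ut μ + (2 * δt) ^ 2 * B μ μ := by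
    simpa only [bilinForm_smul_sub_smul_self hB] using congrArg (fun v => B v v) hstep
  have hcross : B u lam = 0 := (hB.eq u lam).trans horth
  field_simp
  linear_combination hsq + 12 * δt * hcross

/-- Identity (3.19) in the proof of Theorem 3.3: the rewritten correction step
`3u − 2δt·λ = 3ũ − 2δt·μ` of the second-order scheme, combined with the
complementarity `λ·u = 0`, gives
`3‖u‖² + (4/3)δt²‖λ‖² = 3‖ũ‖² − 4δt·[ũ, μ] + (4/3)δt²‖μ‖²`. -/
theorem bdf2_correction_step_identity
    {S : Type*} [Fintype S] [Nonempty S] (w : S → ℝ) (hw : ∀ z, 0 < w z)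
    (δt : ℝ) (hδt : 0 < δt)
    (u ut lam μ : S → ℝ)
    (hstep : ∀ z, 3 * u z - 2 * δt * lam z = 3 * ut z - 2 * δt * μ z)
    (hcomp : ∀ z, lam z * u z = 0) :
    3 * (∑ z, w z * u z * u z) + (4 / 3) * δt ^ 2 * (∑ z, w z * lam z * lam z)
      = 3 * (∑ z, w z * ut z * ut z) - 4 * δt * (∑ z, w z * ut z * μ z)
        + (4 / 3) * δt ^ 2 * (∑ z, w z * μ z * μ z) := by
  simpa only [discreteInner.apply_eq_sum] using
    bdf2_correction_step_identity_general three_ne_zero (discreteInner.isSymm w) (funext hstep)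
      (discreteInner.eq_zero_of_mul_eq_zero hcomp)
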